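/- arXiv:2309.05039 — 2 statements merged into one kernel-verified Lean document; each statement's English description precedes it below -/
import Mathlib

section
/- Let p be an odd prime. Every closed subgroup G of Z_p^× is of the form G_fin × (1 + p^k Z_p) for a unique subgroup G_fin of the torsion subgroup μ_{p-1} and a unique k with 1 ≤ k ≤ ∞, where 1 + p^∞ Z_p is interpreted as the trivial group. -/
/-- The group `μ_{p-1}` of `(p-1)`-st roots of unity in `ℤ_[p]ˣ` (the torsion subgroup). -/
def muSubgroup (p : ℕ) [Fact p.Prime] : Subgroup ℤ_[p]ˣ where
  carrier := {x : ℤ_[p]ˣ | x ^ (p - 1) = 1}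
  one_mem' := one_pow _
  mul_mem' := by
    intro a b ha hb
    simp only [Set.mem_setOf_eq] at *
    rw [mul_pow, ha, hb, mul_one]
  inv_mem' := by
    intro a ha
    simp only [Set.mem_setOf_eq] at *
    rw [inv_pow, ha, inv_one]

/-- The subgroup `1 + p^k ℤ_p` of `ℤ_[p]ˣ`, as the kernel of reduction modulo `p^k`. -/
noncomputable def onePlusPPow (p : ℕ) [Fact p.Prime] (k : ℕ) : Subgroup ℤ_[p]ˣ :=
  MonoidHom.ker (Units.map (PadicInt.toZModPow (p := p) k).toMonoidHom)

/-- The subgroup `1 + p^k ℤ_p` for `k ∈ ℕ∞`, where `1 + p^∞ ℤ_p` is the trivial group. -/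
noncomputable def onePlusPPowE (p : ℕ) [Fact p.Prime] (k : ℕ∞) : Subgroup ℤ_[p]ˣ :=
  WithTop.recTopCoe ⊥ (fun n => onePlusPPow p n) k

namespace Stmt6

variable {p : ℕ} [Fact p.Prime]

lemma mem_U {n : ℕ} {u : ℤ_[p]ˣ} :
    u ∈ onePlusPPow p n ↔ (p : ℤ_[p]) ^ n ∣ (u : ℤ_[p]) - 1 := by
  rw [← Ideal.mem_span_singleton, ← PadicInt.ker_toZModPow, RingHom.mem_ker, map_sub, map_one,
    sub_eq_zero, onePlusPPow, MonoidHom.mem_ker, Units.ext_iff]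
  rfl

lemma mul_inv_mem_U {n : ℕ} {x y : ℤ_[p]ˣ} :
    x * y⁻¹ ∈ onePlusPPow p n ↔ (p : ℤ_[p]) ^ n ∣ (x : ℤ_[p]) - y := by
  rw [mem_U]
  have h : (x : ℤ_[p]) - y = (((x * y⁻¹ : ℤ_[p]ˣ) : ℤ_[p]) - 1) * y := by
    rw [Units.val_mul, sub_mul, mul_assoc, Units.inv_mul]; ring
  rw [h, Units.dvd_mul_right]

lemma U_anti {m n : ℕ} (h : m ≤ n) : onePlusPPow p n ≤ onePlusPPow p m := by
  intro u hu
  rw [mem_U] at *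
  exact (pow_dvd_pow _ h).trans hu

lemma eq_one_of_forall {u : ℤ_[p]ˣ} (h : ∀ n, u ∈ onePlusPPow p n) : u = 1 := by
  apply Units.ext
  rw [← PadicInt.ext_of_toZModPow]
  intro n
  have := h n
  rw [onePlusPPow, MonoidHom.mem_ker, Units.ext_iff] at this
  rw [Units.val_one, map_one]
  exact this

lemma pow_p_formula (hp : Odd p) {u : ℤ_[p]ˣ} (hu : u ∈ onePlusPPow p 1) :
    ∃ v : ℤ_[p]ˣ, (u : ℤ_[p]) ^ p - 1 = ((u : ℤ_[p]) - 1) * p * v := by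
  rw [mem_U, pow_one] at hu
  obtain ⟨c, hc⟩ := hu
  obtain ⟨d, hd⟩ := odd_sq_dvd_geom_sum₂_sub (p := p) (1 : ℤ_[p]) c hp
  have hu' : (u : ℤ_[p]) = 1 + p * c := by rw [← hc]; ring
  simp only [one_pow, mul_one, ← hu'] at hd
  have hv : IsUnit (1 + (p : ℤ_[p]) * d) := by
    by_contra hcon
    rw [PadicInt.not_isUnit_iff, PadicInt.norm_lt_one_iff_dvd] at hcon
    have : (p : ℤ_[p]) ∣ 1 := (dvd_add_left (Dvd.intro d rfl)).1 hcon
    exact PadicInt.prime_p.not_dvd_one this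
  obtain ⟨v, hv⟩ := hv
  refine ⟨v, ?_⟩
  rw [hv, ← mul_geom_sum, sub_eq_iff_eq_add.1 hd]
  ring

lemma pow_p_mem_iff (hp : Odd p) {u : ℤ_[p]ˣ} (hu : u ∈ onePlusPPow p 1) (m : ℕ) :
    u ^ p ∈ onePlusPPow p (m + 1) ↔ u ∈ onePlusPPow p m := by
  obtain ⟨v, hv⟩ := pow_p_formula hp hu
  rw [mem_U, mem_U, Units.val_pow_eq_pow_val, hv, Units.dvd_mul_right, pow_succ]
  exact mul_dvd_mul_iff_right PadicInt.prime_p.ne_zero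

lemma pow_p_pow_mem_iff (hp : Odd p) {u : ℤ_[p]ˣ} (hu : u ∈ onePlusPPow p 1) (m n : ℕ) :
    u ^ p ^ n ∈ onePlusPPow p (m + n) ↔ u ∈ onePlusPPow p m := by
  induction n with
  | zero => simp
  | succ n ih =>
    rw [pow_succ, pow_mul, ← add_assoc, pow_p_mem_iff hp (Subgroup.pow_mem _ hu _), ih]

lemma mem_of_approx {G : Subgroup ℤ_[p]ˣ} (hG : IsClosed (G : Set ℤ_[p]ˣ)) {x : ℤ_[p]ˣ}
    (h : ∀ n, ∃ g ∈ G, (p : ℤ_[p]) ^ n ∣ (x : ℤ_[p]) - g) : x ∈ G := by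
  choose g hg hd using h
  refine hG.mem_of_tendsto (f := g) (b := Filter.atTop) ?_ (Filter.Eventually.of_forall hg)
  rw [Units.isOpenEmbedding_val.isEmbedding.tendsto_nhds_iff, Metric.tendsto_atTop]
  intro ε hε
  obtain ⟨k, hk⟩ := PadicInt.exists_pow_neg_lt p hε
  refine ⟨k, fun n hn => lt_of_le_of_lt ?_ hk⟩
  rw [dist_comm, dist_eq_norm, PadicInt.norm_le_pow_iff_mem_span_pow, Ideal.mem_span_singleton]
  exact (pow_dvd_pow _ hn).trans (hd n)

lemma exists_root (u : ℤ_[p]ˣ) :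
    ∃ w ∈ muSubgroup p, u * w⁻¹ ∈ onePlusPPow p 1 := by
  have hp1 : 1 ≤ p - 1 := Nat.le_sub_one_of_lt (Fact.out : p.Prime).one_lt
  let F : Polynomial ℤ_[p] := Polynomial.X ^ (p - 1) - 1
  have hd : F.derivative.aeval (u : ℤ_[p]) = ((p - 1 : ℕ) : ℤ_[p]) * (u : ℤ_[p]) ^ (p - 1 - 1) := by
    simp [F, Polynomial.derivative_X_pow]
  have hn : ‖F.derivative.aeval (u : ℤ_[p])‖ = 1 := by
    rw [hd, norm_mul, norm_pow, PadicInt.norm_units, one_pow, mul_one,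
      PadicInt.norm_natCast_eq_one_iff]
    exact ((Nat.coprime_self_sub_right (by omega)).2 (Nat.coprime_one_right p))
  have hF : ‖F.aeval (u : ℤ_[p])‖ < 1 := by
    have : F.aeval (u : ℤ_[p]) = (u : ℤ_[p]) ^ (p - 1) - 1 := by simp [F]
    rw [this, PadicInt.norm_lt_one_iff_dvd, ← Ideal.mem_span_singleton,
      ← PadicInt.maximalIdeal_eq_span_p, ← PadicInt.ker_toZMod, RingHom.mem_ker, map_sub, map_pow,
      map_one, sub_eq_zero]
    apply ZMod.pow_card_sub_one_eq_one
    exact (u.isUnit.map (PadicInt.toZMod (p := p))).ne_zero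
  obtain ⟨z, hz, hzu, -⟩ := hensels_lemma (F := F) (a := (u : ℤ_[p])) (by rw [hn]; simpa using hF)
  have hz1 : z ^ (p - 1) = 1 := by
    have : z ^ (p - 1) - 1 = 0 := by simpa [F] using hz
    exact sub_eq_zero.1 this
  obtain ⟨w, rfl⟩ := IsUnit.of_pow_eq_one hz1 (by omega)
  refine ⟨w, ?_, ?_⟩
  · change w ^ (p - 1) = 1
    exact Units.ext (by simpa using hz1)
  · rw [mul_inv_mem_U, pow_one, ← PadicInt.norm_lt_one_iff_dvd, norm_sub_rev, ← hn]
    exact hzu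

lemma mu_inf_U (hp : Odd p) : muSubgroup p ⊓ onePlusPPow p 1 = ⊥ := by
  rw [eq_bot_iff]
  rintro u ⟨h1, h2⟩
  change u ^ (p - 1) = 1 at h1
  have h2 : u ∈ onePlusPPow p 1 := h2
  have hup : u ^ p = u := by
    rw [← mul_pow_sub_one (Fact.out : p.Prime).ne_zero, h1, mul_one]
  rw [Subgroup.mem_bot]
  apply eq_one_of_forall
  intro n
  induction n with
  | zero => exact U_anti (Nat.zero_le 1) h2
  | succ n ih =>
    have := (pow_p_mem_iff hp h2 n).2 ih
    rwa [hup] at this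

lemma root_mem (hp : Odd p) {G : Subgroup ℤ_[p]ˣ} (hG : IsClosed (G : Set ℤ_[p]ˣ))
    {g w : ℤ_[p]ˣ} (hg : g ∈ G) (hw : w ∈ muSubgroup p) (h : g * w⁻¹ ∈ onePlusPPow p 1) :
    w ∈ G := by
  change w ^ (p - 1) = 1 at hw
  have hwp : w ^ p = w := by
    rw [← mul_pow_sub_one (Fact.out : p.Prime).ne_zero, hw, mul_one]
  have hwn : ∀ n, w ^ p ^ n = w := by
    intro n
    induction n with
    | zero => simp
    | succ n ih => rw [pow_succ, pow_mul, ih, hwp]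
  apply mem_of_approx hG
  intro n
  refine ⟨g ^ p ^ n, Subgroup.pow_mem _ hg _, ?_⟩
  rw [dvd_sub_comm, ← mul_inv_mem_U]
  have := (pow_p_pow_mem_iff hp h 1 n).2 h
  rw [mul_pow, inv_pow, hwn] at this
  exact U_anti (by omega) this

lemma pow_approx {k : ℕ} (hk : 1 ≤ k) {w : ℤ_[p]} (hw : (p : ℤ_[p]) ^ k ∣ w - 1) (c : ℕ) :
    (p : ℤ_[p]) ^ (k + 1) ∣ w ^ c - 1 - c * (w - 1) := by
  induction c with
  | zero => simp
  | succ c ih =>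
    have h2 : (p : ℤ_[p]) ^ (k + 1) ∣ (w - 1) ^ 2 := by
      refine (pow_dvd_pow _ (by omega : k + 1 ≤ k * 2)).trans ?_
      rw [pow_mul]
      exact pow_dvd_pow_of_dvd hw 2
    have : w ^ (c + 1) - 1 - ((c + 1 : ℕ) : ℤ_[p]) * (w - 1)
        = w * (w ^ c - 1 - c * (w - 1)) + c * (w - 1) ^ 2 := by
      push_cast; ring
    rw [this]
    exact dvd_add (ih.mul_left _) (h2.mul_left _)

lemma step {k : ℕ} (hk : 1 ≤ k) {w y : ℤ_[p]ˣ} (hw : w ∈ onePlusPPow p k)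
    (hw' : w ∉ onePlusPPow p (k + 1)) (hy : y ∈ onePlusPPow p k) :
    ∃ c : ℕ, y * (w ^ c)⁻¹ ∈ onePlusPPow p (k + 1) := by
  rw [mem_U] at *
  have hw0 := hw
  obtain ⟨a, ha⟩ := hw
  obtain ⟨b, hb⟩ := hy
  have hau : IsUnit a := by
    by_contra hcon
    rw [PadicInt.not_isUnit_iff, PadicInt.norm_lt_one_iff_dvd] at hcon
    apply hw'
    rw [ha, pow_succ]
    exact mul_dvd_mul_left _ hcon
  obtain ⟨a', ha'⟩ := hau.exists_right_inv
  obtain ⟨c, -, hc⟩ := PadicInt.exists_mem_range (b * a')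
  rw [PadicInt.maximalIdeal_eq_span_p, Ideal.mem_span_singleton] at hc
  refine ⟨c, ?_⟩
  rw [mul_inv_mem_U, Units.val_pow_eq_pow_val]
  have h1 := pow_approx hk hw0 c
  have h2 : (p : ℤ_[p]) ^ (k + 1) ∣ ((y : ℤ_[p]) - 1) - c * ((w : ℤ_[p]) - 1) := by
    rw [ha, hb, pow_succ]
    have : (p : ℤ_[p]) ^ k * b - c * (p ^ k * a) = p ^ k * ((b * a' - c) * a) := by
      linear_combination (-(p : ℤ_[p]) ^ k * b) * ha'
    rw [this]
    exact mul_dvd_mul_left _ (hc.mul_right _)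
  have := dvd_sub h2 h1
  convert this using 1
  ring

lemma U_le (hp : Odd p) {G : Subgroup ℤ_[p]ˣ} (hG : IsClosed (G : Set ℤ_[p]ˣ)) {m : ℕ}
    (hm : 1 ≤ m) {u : ℤ_[p]ˣ} (huG : u ∈ G) (hu : u ∈ onePlusPPow p m)
    (hu' : u ∉ onePlusPPow p (m + 1)) : onePlusPPow p m ≤ G := by
  intro x hx
  have key : ∀ n, ∃ g ∈ G, x * g⁻¹ ∈ onePlusPPow p (m + n) := by
    intro n
    induction n with
    | zero => exact ⟨1, G.one_mem, by simpa using hx⟩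
    | succ n ih =>
      obtain ⟨g, hg, hxg⟩ := ih
      have hu1 := U_anti hm hu
      have h1 := (pow_p_pow_mem_iff hp hu1 m n).2 hu
      have h2 : u ^ p ^ n ∉ onePlusPPow p (m + n + 1) := by
        rw [add_right_comm, pow_p_pow_mem_iff hp hu1 (m + 1) n]
        exact hu'
      obtain ⟨c, hc⟩ := step (by omega) h1 h2 hxg
      refine ⟨g * (u ^ p ^ n) ^ c, G.mul_mem hg (G.pow_mem (G.pow_mem huG _) _), ?_⟩
      rw [mul_inv, ← mul_assoc]
      exact hc
  apply mem_of_approx hG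
  intro n
  obtain ⟨g, hg, h⟩ := key n
  exact ⟨g, hg, mul_inv_mem_U.1 (U_anti (by omega) h)⟩

lemma UE_coe (n : ℕ) : onePlusPPowE p (n : ℕ∞) = onePlusPPow p n := rfl

lemma UE_top : onePlusPPowE p ⊤ = ⊥ := rfl

lemma UE_le {n : ℕ} {k : ℕ∞} (h : (n : ℕ∞) ≤ k) : onePlusPPowE p k ≤ onePlusPPow p n := by
  induction k using ENat.recTopCoe with
  | top => rw [UE_top]; exact bot_le
  | coe k => rw [UE_coe]; exact U_anti (by exact_mod_cast h)

lemma exists_UE (hp : Odd p) {G : Subgroup ℤ_[p]ˣ} (hG : IsClosed (G : Set ℤ_[p]ˣ)) :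
    ∃ k : ℕ∞, 1 ≤ k ∧ G ⊓ onePlusPPow p 1 = onePlusPPowE p k := by
  classical
  by_cases h : G ⊓ onePlusPPow p 1 = ⊥
  · exact ⟨⊤, le_top, h⟩
  have hex : ∃ m : ℕ, ∃ u ∈ G ⊓ onePlusPPow p 1, u ∉ onePlusPPow p (m + 1) := by
    by_contra! hcon
    apply h
    rw [eq_bot_iff]
    intro u hu
    rw [Subgroup.mem_bot]
    exact eq_one_of_forall fun n => U_anti (Nat.le_succ n) (hcon n u hu)
  obtain ⟨u, hu, hu'⟩ := Nat.find_spec hex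
  have hmin := fun k => Nat.find_min hex (m := k)
  generalize Nat.find hex = m at *
  have hm : 1 ≤ m := by
    rcases Nat.eq_zero_or_pos m with rfl | h0
    · exact absurd hu.2 hu'
    · exact h0
  have hle : G ⊓ onePlusPPow p 1 ≤ onePlusPPow p m := by
    intro x hx
    by_contra hxm
    apply hmin (m - 1) (by omega)
    refine ⟨x, hx, ?_⟩
    rwa [Nat.sub_add_cancel hm]
  refine ⟨m, by exact_mod_cast hm, ?_⟩
  rw [UE_coe]
  exact le_antisymm hle (le_inf (U_le hp hG hm hu.1 (hle hu) hu') (U_anti hm))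

lemma UE_not_le {k l : ℕ∞} (hk : 1 ≤ k) (hkl : k < l) :
    ¬ onePlusPPowE p k ≤ onePlusPPowE p l := by
  intro hle
  lift k to ℕ using hkl.ne_top
  have hk1 : 1 ≤ k := by exact_mod_cast hk
  have hle2 : onePlusPPow p k ≤ onePlusPPow p (k + 1) :=
    hle.trans (UE_le (by push_cast; exact Order.add_one_le_of_lt hkl))
  have hunit : IsUnit (1 + (p : ℤ_[p]) ^ k) := by
    by_contra hcon
    rw [PadicInt.not_isUnit_iff, PadicInt.norm_lt_one_iff_dvd] at hcon
    exact PadicInt.prime_p.not_dvd_one ((dvd_add_left (dvd_pow_self _ (by omega))).1 hcon)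
  obtain ⟨t, ht⟩ := hunit
  have h1 : t ∈ onePlusPPow p k := by rw [mem_U, ht]; simp
  have h2 := hle2 h1
  rw [mem_U, ht, add_sub_cancel_left,
    pow_dvd_pow_iff PadicInt.prime_p.ne_zero PadicInt.prime_p.not_unit] at h2
  omega

lemma UE_inj {k l : ℕ∞} (hk : 1 ≤ k) (hl : 1 ≤ l) (h : onePlusPPowE p k = onePlusPPowE p l) :
    k = l := by
  rcases lt_trichotomy k l with hlt | heq | hlt
  · exact absurd h.le (UE_not_le hk hlt)
  · exact heq
  · exact absurd h.ge (UE_not_le hl hlt)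

lemma recover (hp : Odd p) {G F : Subgroup ℤ_[p]ˣ} {k : ℕ∞} (hF : F ≤ muSubgroup p) (hk : 1 ≤ k)
    (h : G = F ⊔ onePlusPPowE p k) :
    F = G ⊓ muSubgroup p ∧ onePlusPPowE p k = G ⊓ onePlusPPow p 1 := by
  have hU : onePlusPPowE p k ≤ onePlusPPow p 1 := UE_le (by exact_mod_cast hk)
  have h1 : onePlusPPowE p k ⊓ muSubgroup p = ⊥ := by
    rw [eq_bot_iff, ← mu_inf_U hp, inf_comm]
    exact inf_le_inf_left _ hU
  have h2 : F ⊓ onePlusPPow p 1 = ⊥ := by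
    rw [eq_bot_iff, ← mu_inf_U hp]
    exact inf_le_inf_right _ hF
  constructor
  · rw [h, sup_inf_assoc_of_le _ hF, h1, sup_bot_eq]
  · rw [h, sup_comm, sup_inf_assoc_of_le _ hU, h2, sup_bot_eq]

end Stmt6

open Stmt6 in
/-- For an odd prime `p`, every closed subgroup `G` of `ℤ_[p]ˣ` is of the form
`G_fin × (1 + p^k ℤ_p)` for a unique subgroup `G_fin` of the torsion subgroup `μ_{p-1}`
and a unique `k` with `1 ≤ k ≤ ∞` (where `1 + p^∞ ℤ_p` means the trivial group). -/
theorem stmt_6 (p : ℕ) [Fact p.Prime] (hp : Odd p) (G : Subgroup ℤ_[p]ˣ)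
    (hG : IsClosed (G : Set ℤ_[p]ˣ)) :
    ∃! hk : Subgroup ℤ_[p]ˣ × ℕ∞,
      hk.1 ≤ muSubgroup p ∧ 1 ≤ hk.2 ∧ G = hk.1 ⊔ onePlusPPowE p hk.2 := by
  obtain ⟨k, hk, hGk⟩ := exists_UE hp hG
  refine ⟨(G ⊓ muSubgroup p, k), ⟨inf_le_right, hk, ?_⟩, ?_⟩
  · apply le_antisymm
    · intro g hg
      obtain ⟨w, hw, hgw⟩ := exists_root g
      have hwG := root_mem hp hG hg hw hgw
      have h1 : g * w⁻¹ ∈ onePlusPPowE p k := by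
        rw [← hGk]
        exact ⟨G.mul_mem hg (G.inv_mem hwG), hgw⟩
      have h2 : g = w * (g * w⁻¹) := by rw [mul_comm, inv_mul_cancel_right]
      rw [h2]
      exact Subgroup.mul_mem_sup ⟨hwG, hw⟩ h1
    · refine sup_le inf_le_left ?_
      change onePlusPPowE p k ≤ G
      rw [← hGk]
      exact inf_le_left
  · rintro ⟨F, l⟩ ⟨hF, hl, h⟩
    obtain ⟨h1, h2⟩ := recover hp hF hl h
    exact Prod.ext h1 (UE_inj hl hk (h2.trans hGk))
end

section
/- Let p be an odd prime and G an open subgroup of Z_p^×. Then there exists a prime number q whose image in Z_p^× topologically generates G. -/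
section aux
variable {p : ℕ} [Fact p.Prime]

noncomputable def lvl (p : ℕ) [Fact p.Prime] (n : ℕ) : ℤ_[p]ˣ →* (ZMod (p ^ n))ˣ :=
  Units.map (PadicInt.toZModPow n : ℤ_[p] →+* ZMod (p ^ n)).toMonoidHom

lemma lvl_eq_one_iff (n : ℕ) (x : ℤ_[p]ˣ) :
    lvl p n x = 1 ↔ (p : ℤ_[p]) ^ n ∣ (x : ℤ_[p]) - 1 := by
  rw [← Ideal.mem_span_singleton, ← PadicInt.ker_toZModPow, RingHom.mem_ker, map_sub, map_one,
    sub_eq_zero, Units.ext_iff]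
  rfl

lemma lvl_eq_iff (n : ℕ) (x y : ℤ_[p]ˣ) :
    lvl p n x = lvl p n y ↔ (p : ℤ_[p]) ^ n ∣ (x : ℤ_[p]) - y := by
  rw [← Ideal.mem_span_singleton, ← PadicInt.ker_toZModPow, RingHom.mem_ker, map_sub,
    sub_eq_zero, Units.ext_iff]
  rfl

lemma lvl_mono {m n : ℕ} (h : m ≤ n) {x : ℤ_[p]ˣ} (hx : lvl p n x = 1) : lvl p m x = 1 := by
  rw [lvl_eq_one_iff] at *
  exact (pow_dvd_pow _ h).trans hx

lemma lvl_pow (n : ℕ) (x : ℤ_[p]ˣ) (hx : lvl p 1 x = 1) : lvl p n (x ^ p ^ n) = 1 := by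
  rw [lvl_eq_one_iff] at *
  have h := dvd_sub_pow_of_dvd_sub (R := ℤ_[p]) (p := p) (a := x) (b := 1) (by simpa using hx) n
  rw [one_pow] at h
  push_cast
  exact (pow_dvd_pow _ (Nat.le_succ n)).trans h

lemma one_add_pow_aux {R : Type*} [CommRing R] (x : R) (m : ℕ) :
    x ^ 2 ∣ (1 + x) ^ m - 1 - m * x := by
  induction m with
  | zero => simp
  | succ m ih =>
    obtain ⟨c, hc⟩ := ih
    refine ⟨c * (1 + x) + m, ?_⟩
    have : (1 + x) ^ m = 1 + m * x + x ^ 2 * c := by linear_combination hc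
    rw [pow_succ, this]; push_cast; ring

lemma exists_level (G : Subgroup ℤ_[p]ˣ) (hG : IsOpen (G : Set ℤ_[p]ˣ)) :
    ∃ k, 1 ≤ k ∧ ∀ x, lvl p k x = 1 → x ∈ G := by
  have h2 := Units.isOpenEmbedding_val.isOpenMap _ hG
  obtain ⟨e, he, hb⟩ := Metric.isOpen_iff.1 h2 1 ⟨1, G.one_mem, rfl⟩
  obtain ⟨k, hk⟩ := PadicInt.exists_pow_neg_lt p he
  refine ⟨k + 1, by omega, fun x hx => ?_⟩
  have hx := lvl_mono (Nat.le_succ k) hx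
  rw [lvl_eq_one_iff, ← Ideal.mem_span_singleton, ← PadicInt.norm_le_pow_iff_mem_span_pow] at hx
  obtain ⟨y, hy, hyx⟩ := hb (show (x : ℤ_[p]) ∈ Metric.ball 1 e by
    rw [Metric.mem_ball, dist_eq_norm]; exact hx.trans_lt hk)
  rwa [← Units.ext hyx]

lemma exists_gen (hp : Odd p) (G : Subgroup ℤ_[p]ˣ) (n : ℕ) :
    ∃ h ∈ G, ∀ g ∈ G, ∃ b : ℤ, lvl p n g = lvl p n h ^ b := by
  have hpp : p.Prime := Fact.out
  have := ZMod.isCyclic_units_of_prime_pow p hpp (by rintro rfl; revert hp; decide) n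
  obtain ⟨⟨y, h, hh, rfl⟩, hy⟩ := IsCyclic.exists_generator (α := G.map (lvl p n))
  refine ⟨h, hh, fun g hg => ?_⟩
  obtain ⟨b, hb⟩ := hy ⟨_, g, hg, rfl⟩
  exact ⟨b, by simpa using (congrArg Subtype.val hb).symm⟩

lemma p_dvd (k : ℕ) (hk : 1 ≤ k) (G : Subgroup ℤ_[p]ˣ) (hG : ∀ x, lvl p k x = 1 → x ∈ G)
    (h : ℤ_[p]ˣ) (hh : ∀ g ∈ G, ∃ b : ℤ, lvl p (k + 1) g = lvl p (k + 1) h ^ b)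
    (m : ℤ) (hm : lvl p (k + 1) h ^ m = 1) : (p : ℤ) ∣ m := by
  have hpp : p.Prime := Fact.out
  have hp0 : (p : ℤ_[p]) ≠ 0 := by exact_mod_cast hpp.ne_zero
  have hu : IsUnit (1 + (p : ℤ_[p]) ^ k) := by
    have := (IsLocalRing.isUnit_one_sub_self_of_mem_nonunits (-(p : ℤ_[p]) ^ k) (by
      rw [PadicInt.mem_nonunits, PadicInt.norm_lt_one_iff_dvd, dvd_neg]
      exact dvd_pow_self _ (by omega)))
    simpa using this
  obtain ⟨v, hv⟩ := hu
  obtain ⟨e, he⟩ := hh v (hG _ (by rw [lvl_eq_one_iff, hv]; simp))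
  have h1 : lvl p (k + 1) (v ^ m.natAbs) = 1 := by
    have h3 : lvl p (k + 1) v ^ m = 1 := by rw [he, ← zpow_mul, mul_comm, zpow_mul, hm, one_zpow]
    rw [map_pow]
    rwa [pow_natAbs_eq_one]
  rw [lvl_eq_one_iff] at h1
  push_cast at h1
  rw [hv] at h1
  have h4 := one_add_pow_aux ((p : ℤ_[p]) ^ k) m.natAbs
  have h5 : (p : ℤ_[p]) ^ (k + 1) ∣ ((p : ℤ_[p]) ^ k) ^ 2 := by
    rw [← pow_mul]; exact pow_dvd_pow _ (by omega)
  have h6 := (dvd_sub_right h1).1 (h5.trans h4)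
  rw [pow_succ, mul_comm (m.natAbs : ℤ_[p]), mul_dvd_mul_iff_left (pow_ne_zero _ hp0),
    ← PadicInt.norm_lt_one_iff_dvd] at h6
  have h7 := (PadicInt.norm_int_lt_one_iff_dvd (p := p) (m.natAbs : ℤ)).1
    (by rw [Int.cast_natCast]; exact h6)
  exact Int.dvd_natAbs.1 h7

lemma key (hp : Odd p) (k : ℕ) (hk : 1 ≤ k) (G : Subgroup ℤ_[p]ˣ)
    (hG : ∀ x, lvl p k x = 1 → x ∈ G) (u : ℤ_[p]ˣ) (huG : u ∈ G)
    (hu : ∀ g ∈ G, ∃ b : ℤ, lvl p (k + 1) g = lvl p (k + 1) u ^ b) (n : ℕ) (hn : k + 1 ≤ n)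
    (g : ℤ_[p]ˣ) (hg : g ∈ G) : ∃ c : ℤ, lvl p n g = lvl p n (u ^ c) := by
  have hpp : p.Prime := Fact.out
  have down : ∀ x y : ℤ_[p]ˣ, lvl p n x = lvl p n y → lvl p (k + 1) x = lvl p (k + 1) y := by
    intro x y h
    rw [lvl_eq_iff] at *
    exact (pow_dvd_pow _ hn).trans h
  obtain ⟨h, hhG, hh⟩ := exists_gen hp G n
  obtain ⟨a, ha⟩ := hh u huG
  obtain ⟨b, hb⟩ := hu h hhG
  rw [← map_zpow] at ha
  have ha' := down _ _ ha
  have h1 : lvl p (k + 1) h ^ (a * b - 1) = 1 := by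
    rw [zpow_sub, zpow_mul, ← map_zpow _ h a, ← ha', ← hb]; simp
  have hd := p_dvd k hk G hG h (fun g hg => by
    obtain ⟨b, hb⟩ := hh g hg
    rw [← map_zpow] at hb
    exact ⟨b, by rw [down _ _ hb, map_zpow]⟩) _ h1
  have h2 : lvl p n h ^ ((a * b - 1) * (p : ℤ) ^ n) = 1 := by
    have := lvl_pow n (h ^ (a * b - 1)) (lvl_mono (n := k + 1) (by omega) (by rw [map_zpow]; exact h1))
    rw [map_pow, map_zpow, ← zpow_natCast, ← zpow_mul] at this
    exact_mod_cast this
  have c1 : IsCoprime a (a * b - 1) := ⟨b, -1, by ring⟩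
  have c2 : IsCoprime a (p : ℤ) := c1.of_isCoprime_of_dvd_right hd
  obtain ⟨c, d, hcd⟩ := c1.mul_right (c2.pow_right (n := n))
  obtain ⟨f, hf⟩ := hh g hg
  refine ⟨c * f, ?_⟩
  have h3 : lvl p n h = lvl p n u ^ c := by
    rw [ha, map_zpow, ← zpow_mul]
    conv_lhs => rw [← zpow_one (lvl p n h), ← hcd, zpow_add, mul_comm d, zpow_mul _ _ d, h2,
      one_zpow, mul_one, mul_comm c]
  rw [hf, h3, map_zpow, zpow_mul]

end aux

/-- For an odd prime `p` and an open subgroup `G` of `ℤ_[p]ˣ`, there exists a prime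
number `q` whose image in `ℤ_[p]ˣ` topologically generates `G`. -/
theorem stmt_7 (p : ℕ) [Fact p.Prime] (hp : Odd p) (G : Subgroup ℤ_[p]ˣ)
    (hG : IsOpen (G : Set ℤ_[p]ˣ)) :
    ∃ q : ℕ, q.Prime ∧ ∃ u : ℤ_[p]ˣ, (u : ℤ_[p]) = (q : ℤ_[p]) ∧
      (Subgroup.closure {u}).topologicalClosure = G := by
  have hpp : p.Prime := Fact.out
  obtain ⟨k, hk, hkG⟩ := exists_level G hG
  obtain ⟨α, hα, hgen⟩ := exists_gen hp G (k + 1)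
  have : NeZero (p ^ (k + 1)) := ⟨pow_ne_zero _ hpp.ne_zero⟩
  obtain ⟨q, hqp, hq, hqα⟩ := Nat.forall_exists_prime_gt_and_eq_mod (lvl p (k + 1) α).isUnit p
  have hqu : IsUnit (q : ℤ_[p]) := by
    by_contra hcon
    rw [← mem_nonunits_iff, PadicInt.mem_nonunits] at hcon
    have := (PadicInt.norm_int_lt_one_iff_dvd (p := p) (q : ℤ)).1 (by exact_mod_cast hcon)
    have := (Nat.prime_dvd_prime_iff_eq hpp hq).1 (by exact_mod_cast this)
    omega
  obtain ⟨u, hu⟩ := hqu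
  have huα : lvl p (k + 1) u = lvl p (k + 1) α := by
    apply Units.ext
    rw [← hqα]
    change PadicInt.toZModPow (k + 1) (u : ℤ_[p]) = _
    rw [hu, map_natCast]
  have huG : u ∈ G := by
    have h1 : lvl p (k + 1) (u * α⁻¹) = 1 := by rw [map_mul, map_inv, huα, mul_inv_cancel]
    have := G.mul_mem (hkG _ (lvl_mono (Nat.le_succ k) h1)) hα
    simpa using this
  refine ⟨q, hq, u, hu, le_antisymm ?_ ?_⟩
  · apply Subgroup.topologicalClosure_minimal
    · simpa using huG
    · exact Subgroup.isClosed_of_isOpen G hG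
  · intro g hg
    change g ∈ closure ((Subgroup.closure {u} : Subgroup ℤ_[p]ˣ) : Set ℤ_[p]ˣ)
    rw [Units.isOpenEmbedding_val.isInducing.closure_eq_preimage_closure_image, Set.mem_preimage,
      Metric.mem_closure_iff]
    intro e he
    obtain ⟨n, hn⟩ := PadicInt.exists_pow_neg_lt p he
    obtain ⟨c, hc⟩ := key hp k hk G hkG u huG (by rwa [huα]) (n + (k + 1)) (by omega) g hg
    have hm : u ^ c ∈ Subgroup.closure {u} := Subgroup.mem_closure_singleton.2 ⟨c, rfl⟩
    refine ⟨((u ^ c : ℤ_[p]ˣ) : ℤ_[p]), Set.mem_image_of_mem _ hm, ?_⟩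
    rw [lvl_eq_iff] at hc
    have hc := (pow_dvd_pow _ (Nat.le_add_right n (k + 1))).trans hc
    rw [← Ideal.mem_span_singleton, ← PadicInt.norm_le_pow_iff_mem_span_pow] at hc
    rw [dist_eq_norm]
    exact hc.trans_lt hn
end
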